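/- Let p⃗ be a finite subset of [1,∞) with |p⃗| ≥ 2, and let (x_n)_{n<ω} be a p⃗-sequence in a normed space. Then there exist an infinite set A ⊆ ω and a subset q⃗ ⊆ p⃗ with |q⃗| = 2 such that the subsequence (x_n)_{n∈A} is a q⃗-sequence. -/

import Mathlib

open Set

variable {E : Type*} [NormedAddCommGroup E] [NormedSpace ℝ E]

/-- `(x_n)_{n ∈ A}` is an ℓ_p-sequence: for some constant C > 0, for all finitely many
distinct indices in A and all scalars, the norm of the linear combination is within a
factor C of the ℓ_p-norm of the coefficients. -/
def IsLpSeq (p : ℝ) (A : Set ℕ) (x : ℕ → E) : Prop :=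
  ∃ C > (0 : ℝ), ∀ s : Finset ℕ, ↑s ⊆ A → ∀ l : ℕ → ℝ,
    (1 / C) * (∑ i ∈ s, |l i| ^ p) ^ (1 / p) ≤ ‖∑ i ∈ s, l i • x i‖ ∧
    ‖∑ i ∈ s, l i • x i‖ ≤ C * (∑ i ∈ s, |l i| ^ p) ^ (1 / p)

/-- `(x_n)_{n ∈ A}` is P-saturated: every infinite subset of A contains a further
infinite subset on which the sequence is an ℓ_p-sequence for some p ∈ P. -/
def Saturated (P : Set ℝ) (A : Set ℕ) (x : ℕ → E) : Prop :=
  ∀ B ⊆ A, B.Infinite → ∃ B' ⊆ B, B'.Infinite ∧ ∃ p ∈ P, IsLpSeq p B' x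

/-- `(x_n)_{n ∈ A}` is a P-sequence: it is P-saturated and A admits no finite
decomposition into pieces each of which is Q-saturated for some proper subset Q ⊊ P. -/
def IsPvecSeq (P : Set ℝ) (A : Set ℕ) (x : ℕ → E) : Prop :=
  Saturated P A x ∧
    ¬ ∃ (k : ℕ) (As : Fin k → Set ℕ), A = ⋃ i, As i ∧
        ∀ i, ∃ Q : Set ℝ, Q ⊂ P ∧ Saturated Q (As i) x

/-- The ℓ_p-estimate with constant `C` holds on every subset of the finite set `s`. -/
def LpBound (p C : ℝ) (x : ℕ → E) (s : Finset ℕ) : Prop :=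
  ∀ t ⊆ s, ∀ l : ℕ → ℝ,
    (1 / C) * (∑ i ∈ t, |l i| ^ p) ^ (1 / p) ≤ ‖∑ i ∈ t, l i • x i‖ ∧
    ‖∑ i ∈ t, l i • x i‖ ≤ C * (∑ i ∈ t, |l i| ^ p) ^ (1 / p)

theorem IsLpSeq.mono {p : ℝ} {A B : Set ℕ} {x : ℕ → E} (h : IsLpSeq p A x) (hBA : B ⊆ A) :
    IsLpSeq p B x := by
  obtain ⟨C, hC, h⟩ := h
  exact ⟨C, hC, fun s hs l => h s (hs.trans hBA) l⟩

theorem IsLpSeq.exists_nat_bound {p : ℝ} {A : Set ℕ} {x : ℕ → E} (h : IsLpSeq p A x) :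
    ∃ N : ℕ, ∀ s : Finset ℕ, ↑s ⊆ A → LpBound p (N + 1) x s := by
  obtain ⟨C, hC, h⟩ := h
  obtain ⟨N, hN⟩ := exists_nat_ge C
  have hCN : C ≤ (N : ℝ) + 1 := by linarith
  refine ⟨N, fun s hs t ht l => ?_⟩
  obtain ⟨h₁, h₂⟩ := h t ((Finset.coe_subset.2 ht).trans hs) l
  have hnn : 0 ≤ (∑ i ∈ t, |l i| ^ p) ^ (1 / p) := by positivity
  exact ⟨(mul_le_mul_of_nonneg_right (one_div_le_one_div_of_le hC hCN) hnn).trans h₁,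
    h₂.trans (mul_le_mul_of_nonneg_right hCN hnn)⟩

/-- An infinite sequence cannot satisfy both ℓ_p- and ℓ_q-estimates when `p < q`. -/
theorem IsLpSeq.not_of_lt {p q : ℝ} {A : Set ℕ} {x : ℕ → E} (hp : 1 ≤ p) (hpq : p < q)
    (hA : A.Infinite) (h : IsLpSeq p A x) (h' : IsLpSeq q A x) : False := by
  obtain ⟨C, hC, h⟩ := h
  obtain ⟨D, hD, h'⟩ := h'
  have hpos : 0 < 1 / p - 1 / q := by
    have := one_div_lt_one_div_of_lt (by linarith : 0 < p) hpq
    linarith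
  have key : ∀ n : ℕ, 0 < n → (n : ℝ) ^ (1 / p - 1 / q) ≤ C * D := by
    intro n hn
    obtain ⟨s, hs, hcard⟩ := hA.exists_subset_card_eq n
    have h₁ := (h s hs fun _ => 1).1
    have h₂ := (h' s hs fun _ => 1).2
    simp only [abs_one, Real.one_rpow, Finset.sum_const, hcard, nsmul_eq_mul, mul_one] at h₁ h₂
    have hn' : (0 : ℝ) < n := by exact_mod_cast hn
    have h₃ := h₁.trans h₂
    rw [Real.rpow_sub hn', div_le_iff₀ (Real.rpow_pos_of_pos hn' _)]
    rw [one_div_mul_eq_div, div_le_iff₀ hC] at h₃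
    linarith
  have ht := (tendsto_rpow_atTop hpos).comp (tendsto_natCast_atTop_atTop (R := ℝ))
  obtain ⟨n, hn, hn0⟩ :=
    ((ht.eventually_gt_atTop (C * D)).and (Filter.eventually_gt_atTop 0)).exists
  exact absurd (key n hn0) (not_le.2 hn)

theorem IsLpSeq.eq_of_infinite {p q : ℝ} {A : Set ℕ} {x : ℕ → E} (hp : 1 ≤ p) (hq : 1 ≤ q)
    (hA : A.Infinite) (h : IsLpSeq p A x) (h' : IsLpSeq q A x) : p = q := by
  rcases lt_trichotomy p q with hlt | heq | hlt
  · exact (h.not_of_lt hp hlt hA h').elim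
  · exact heq
  · exact (h'.not_of_lt hq hlt hA h).elim

/-- A finite set is vacuously saturated. -/
theorem saturated_of_finite (P : Set ℝ) {A : Set ℕ} (x : ℕ → E) (hA : A.Finite) :
    Saturated P A x :=
  fun _ hB hinf => (hinf (hA.subset hB)).elim

/-- Every value of `f` lies in the set that `A` assigns to the list of previous values. -/
def Follows (A : List ℕ → Set ℕ) (f : ℕ → ℕ) : Prop :=
  ∀ n, f n ∈ A ((List.range n).map f)

/-- `s` is good if every assignment of `u`-large sets is followed by some sequence all of
whose initial segments, added to `s`, satisfy the property `K`. -/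
def Good (u : Ultrafilter ℕ) (K : Finset ℕ → Prop) (s : Finset ℕ) : Prop :=
  ∀ A : List ℕ → Set ℕ, (∀ l, A l ∈ u) →
    ∃ f, Follows A f ∧ ∀ n, K (s ∪ (Finset.range n).image f)

theorem Good.prop {u : Ultrafilter ℕ} {K : Finset ℕ → Prop} {s : Finset ℕ}
    (h : Good u K s) : K s := by
  obtain ⟨f, -, hf⟩ := h (fun _ => univ) (fun _ => Filter.univ_mem)
  simpa using hf 0

theorem Good.eventually_insert {u : Ultrafilter ℕ} {K : Finset ℕ → Prop} {s : Finset ℕ}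
    (h : Good u K s) : {n | Good u K (insert n s)} ∈ u := by
  by_contra hcon
  have hD : {n | Good u K (insert n s)}ᶜ ∈ u := Ultrafilter.compl_mem_iff_notMem.2 hcon
  have hbad : ∀ n, ∃ A : List ℕ → Set ℕ, (∀ l, A l ∈ u) ∧
      (¬ Good u K (insert n s) →
        ∀ f, Follows A f → ∃ m, ¬ K (insert n s ∪ (Finset.range m).image f)) := by
    intro n
    by_cases hn : Good u K (insert n s)
    · exact ⟨fun _ => univ, fun _ => Filter.univ_mem, fun h => (h hn).elim⟩
    · have hn' := hn
      unfold Good at hn'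
      push Not at hn'
      obtain ⟨A, hA, hf⟩ := hn'
      exact ⟨A, hA, fun _ => hf⟩
  choose A hAu hA using hbad
  obtain ⟨f, hf, hK⟩ := h
    (fun l => match l with
      | [] => {n | Good u K (insert n s)}ᶜ
      | n :: l => A n l)
    (fun l => by
      cases l with
      | nil => exact hD
      | cons n l => exact hAu n l)
  have h0 : ¬ Good u K (insert (f 0) s) := hf 0
  obtain ⟨m, hm⟩ := hA (f 0) h0 (fun n => f (n + 1)) (fun n => by
    have := hf (n + 1)
    simpa [List.range_succ_eq_map, Function.comp_def] using this)
  apply hm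
  convert hK (m + 1) using 1
  ext a
  simp only [Finset.mem_union, Finset.mem_insert, Finset.mem_image, Finset.mem_range]
  constructor
  · rintro ((rfl | ha) | ⟨k, hk, rfl⟩)
    · exact Or.inr ⟨0, by omega, rfl⟩
    · exact Or.inl ha
    · exact Or.inr ⟨k + 1, by omega, rfl⟩
  · rintro (ha | ⟨k, hk, rfl⟩)
    · exact Or.inl (Or.inr ha)
    · cases k with
      | zero => exact Or.inl (Or.inl rfl)
      | succ k => exact Or.inr ⟨k, by omega, rfl⟩

theorem exists_seq_mem (D : ℕ → Set ℕ) (hD : ∀ m, (D m).Nonempty) :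
    ∃ g : ℕ → ℕ, g 0 ∈ D 0 ∧ ∀ n, g (n + 1) ∈ D (g n + 1) := by
  choose c hc using hD
  exact ⟨fun n => Nat.rec (c 0) (fun _ y => c (y + 1)) n, hc 0, fun n => hc _⟩

/-- If `(x_n)` is `P`-saturated, then for every nonprincipal ultrafilter the empty set is
good for the ℓ_p-estimates for some `p ∈ P` and some constant. -/
theorem exists_good_empty {P : Finset ℝ} {x : ℕ → E} {u : Ultrafilter ℕ}
    (hu : ∀ m : ℕ, {n | m ≤ n} ∈ u) (hP : Saturated (↑P : Set ℝ) univ x) :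
    ∃ p ∈ P, ∃ N : ℕ, Good u (LpBound p (N + 1) x) ∅ := by
  by_contra! hcon
  have hbad : ∀ p : ℝ, ∀ N : ℕ, ∃ A : List ℕ → Set ℕ, (∀ l, A l ∈ u) ∧ (p ∈ P →
      ∀ f, Follows A f → ∃ m, ¬ LpBound p (N + 1) x ((Finset.range m).image f)) := by
    intro p N
    by_cases hp : p ∈ P
    · have hn := hcon p hp N
      unfold Good at hn
      push Not at hn
      obtain ⟨A, hA, hf⟩ := hn
      exact ⟨A, hA, fun _ => by simpa using hf⟩
    · exact ⟨fun _ => univ, fun _ => Filter.univ_mem, fun h => (hp h).elim⟩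
  choose A hAu hA using hbad
  let D : ℕ → Set ℕ := fun m => {n | m ≤ n} ∩
    ⋂ p ∈ P, ⋂ N ∈ Finset.range m, ⋂ s ∈ (Finset.range m).powerset, A p N (s.sort (· ≤ ·))
  have hD : ∀ m, D m ∈ u := by
    intro m
    refine Filter.inter_mem (hu m) ?_
    refine (Filter.biInter_finset_mem _).2 fun p _ => ?_
    refine (Filter.biInter_finset_mem _).2 fun N _ => ?_
    exact (Filter.biInter_finset_mem _).2 fun s _ => hAu _ _ _
  obtain ⟨g, -, hg⟩ := exists_seq_mem D fun m => u.nonempty_of_mem (hD m)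
  have hmono : StrictMono g := strictMono_nat_of_lt_succ fun n => (hg n).1
  obtain ⟨B, hB, hBinf, p, hp, hBp⟩ :=
    hP (range g) (subset_univ _) (infinite_range_of_injective hmono.injective)
  obtain ⟨N, hN⟩ := hBp.exists_nat_bound
  have hB'inf : (B \ ↑(Finset.range (g (N + 1)))).Infinite :=
    hBinf.sdiff (Finset.finite_toSet _)
  let f : ℕ → ℕ := Nat.nth (· ∈ B \ ↑(Finset.range (g (N + 1))))
  have hf : StrictMono f := Nat.nth_strictMono hB'inf
  have hfm : ∀ n, f n ∈ B \ ↑(Finset.range (g (N + 1))) := Nat.nth_mem_of_infinite hB'inf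
  obtain ⟨m, hm⟩ := hA p N hp f (by
    intro n
    obtain ⟨j, hj⟩ := hB (hfm n).1
    have hge : g (N + 1) ≤ f n := by simpa using (hfm n).2
    have hjN : N + 1 ≤ j := hmono.le_iff_le.1 (hj ▸ hge)
    obtain ⟨i, rfl⟩ : ∃ i, j = i + 1 := ⟨j - 1, by omega⟩
    have hmem := (hg i).2
    rw [hj] at hmem
    simp only [mem_iInter] at hmem
    have hig : i ≤ g i := hmono.le_apply
    have hsort : ((Finset.range n).image f).sort (· ≤ ·) = (List.range n).map f := by
      have hnd : ((List.range n).map f).Nodup := List.nodup_range.map hf.injective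
      have hpw : ((List.range n).map f).Pairwise (· ≤ ·) :=
        List.pairwise_map.2 (List.pairwise_lt_range.imp fun h => (hf h).le)
      rw [← (List.toFinset_sort (· ≤ ·) hnd).2 hpw]
      congr 1
    rw [← hsort]
    refine hmem p hp N (Finset.mem_range.2 (by omega)) _ (Finset.mem_powerset.2 ?_)
    intro a ha
    obtain ⟨k, hk, rfl⟩ := Finset.mem_image.1 ha
    obtain ⟨j', hj'⟩ := hB (hfm k).1
    have hlt : f k < f n := hf (Finset.mem_range.1 hk)
    rw [← hj', ← hj] at hlt
    have : g j' ≤ g i := hmono.monotone (Nat.lt_succ_iff.1 (hmono.lt_iff_lt.1 hlt))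
    rw [Finset.mem_range, ← hj']
    omega)
  refine hm (hN _ ?_)
  intro a ha
  obtain ⟨k, -, rfl⟩ := Finset.mem_image.1 (Finset.mem_coe.1 ha)
  exact (hfm k).1

/-- The numbers `n ≥ m` whose addition preserves goodness of every subset of `{0, …, m - 1}`. -/
def goodExt (u : Ultrafilter ℕ) (K : Finset ℕ → Prop) (m : ℕ) : Set ℕ :=
  {n | m ≤ n ∧ ∀ s ⊆ Finset.range m, Good u K s → Good u K (insert n s)}

theorem goodExt_antitone (u : Ultrafilter ℕ) (K : Finset ℕ → Prop) :
    Antitone (goodExt u K) := fun _ _ hab _ hn =>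
  ⟨hab.trans hn.1, fun s hs => hn.2 s (hs.trans (Finset.range_mono hab))⟩

theorem goodExt_mem {u : Ultrafilter ℕ} (hu : ∀ m : ℕ, {n | m ≤ n} ∈ u)
    (K : Finset ℕ → Prop) (m : ℕ) : goodExt u K m ∈ u := by
  have h : {n | m ≤ n} ∩ ⋂ s ∈ (Finset.range m).powerset,
      {n | Good u K s → Good u K (insert n s)} ∈ u := by
    refine Filter.inter_mem (hu m) ((Filter.biInter_finset_mem _).2 fun s _ => ?_)
    by_cases hs : Good u K s
    · exact Filter.mem_of_superset hs.eventually_insert fun n hn _ => hn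
    · exact Filter.mem_of_superset Filter.univ_mem fun n _ h => (hs h).elim
  refine Filter.mem_of_superset h fun n hn => ⟨hn.1, fun s hs => ?_⟩
  have := hn.2
  simp only [mem_iInter] at this
  exact this s (Finset.mem_powerset.2 hs)

/-- A set meeting every `goodExt` contains an infinite ℓ_p-subsequence. -/
theorem exists_isLpSeq_of_goodExt {p : ℝ} {N : ℕ} {x : ℕ → E} {u : Ultrafilter ℕ} {S : Set ℕ}
    (h0 : Good u (LpBound p (N + 1) x) ∅)
    (hS : ∀ m, (S ∩ goodExt u (LpBound p (N + 1) x) m).Nonempty) :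
    ∃ T ⊆ S, T.Infinite ∧ IsLpSeq p T x := by
  obtain ⟨g, hg0, hg⟩ := exists_seq_mem _ hS
  have hmono : StrictMono g := strictMono_nat_of_lt_succ fun n => (hg n).2.1
  have hgood : ∀ n, Good u (LpBound p (N + 1) x) ((Finset.range n).image g) := by
    intro n
    induction n with
    | zero => simpa using h0
    | succ n ih =>
      rw [Finset.range_add_one, Finset.image_insert]
      cases n with
      | zero => exact hg0.2.2 _ (by simp) ih
      | succ n =>
        refine (hg n).2.2 _ ?_ ih
        intro a ha
        obtain ⟨k, hk, rfl⟩ := Finset.mem_image.1 ha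
        exact Finset.mem_range.2 (Nat.lt_succ_iff.2
          (hmono.monotone (Nat.lt_succ_iff.1 (Finset.mem_range.1 hk))))
  refine ⟨range g, ?_, infinite_range_of_injective hmono.injective, N + 1, by positivity, ?_⟩
  · rintro _ ⟨n, rfl⟩
    cases n with
    | zero => exact hg0.1
    | succ n => exact (hg n).1
  · intro s hs l
    refine (hgood (s.sup id + 1)).prop s (fun a ha => ?_) l
    obtain ⟨k, rfl⟩ := hs ha
    have hle : g k ≤ s.sup id := Finset.le_sup (f := id) ha
    have hk : k ≤ g k := hmono.le_apply
    exact Finset.mem_image.2 ⟨k, Finset.mem_range.2 (by omega), rfl⟩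

/-- For a `P`-sequence there is a nonprincipal ultrafilter all of whose members contain
infinite ℓ_q-subsequences for every `q ∈ P`. -/
theorem IsPvecSeq.exists_ultrafilter {P : Set ℝ} {x : ℕ → E} (hne : P.Nonempty)
    (hx : IsPvecSeq P univ x) :
    ∃ u : Ultrafilter ℕ, (∀ m : ℕ, {n | m ≤ n} ∈ u) ∧
      ∀ A ∈ u, ∀ q ∈ P, ∃ B ⊆ A, B.Infinite ∧ IsLpSeq q B x := by
  obtain ⟨hsat, hpart⟩ := hx
  obtain ⟨u, hu⟩ := Ultrafilter.exists_ultrafilter_of_finite_inter_nonempty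
    {A : Set ℕ | ∃ Q : Set ℝ, Q ⊂ P ∧ Saturated Q Aᶜ x} (by
      intro T hT
      by_contra hemp
      rw [not_nonempty_iff_eq_empty] at hemp
      refine hpart ⟨T.card, fun i => ((T.equivFin.symm i : Set ℕ))ᶜ, ?_, fun i =>
        hT (T.equivFin.symm i).2⟩
      symm
      rw [eq_univ_iff_forall]
      intro n
      have hn : n ∉ ⋂₀ (↑T : Set (Set ℕ)) := by simp [hemp]
      simp only [mem_sInter, not_forall] at hn
      obtain ⟨A, hA, hnA⟩ := hn
      exact mem_iUnion.2 ⟨T.equivFin ⟨A, hA⟩, by simpa using hnA⟩)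
  have hu' : ∀ A ∈ u, ∀ Q ⊂ P, ¬ Saturated Q A x := by
    intro A hA Q hQ hs
    have : Aᶜ ∈ u := hu ⟨Q, hQ, by rwa [compl_compl]⟩
    exact Ultrafilter.compl_mem_iff_notMem.1 this hA
  refine ⟨u, fun m => hu ⟨∅, hne.empty_ssubset, saturated_of_finite _ _ ?_⟩, ?_⟩
  · exact (finite_lt_nat m).subset fun n hn => by simpa using hn
  · intro A hA q hq
    have h := hu' A hA (P \ {q}) (sdiff_singleton_ssubset.2 hq)
    unfold Saturated at h
    push Not at h
    obtain ⟨B, hBA, hB, hno⟩ := h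
    obtain ⟨B', hB'B, hB', p, hp, hlp⟩ := hsat B (subset_univ _) hB
    obtain rfl : p = q := by
      by_contra hpq
      exact hno B' hB'B hB' p ⟨hp, hpq⟩ hlp
    exact ⟨B', hB'B.trans hBA, hB', hlp⟩

/-- if p⃗ ⊆ [1,∞) is finite with |p⃗| ≥ 2 and (x_n)_{n<ω} is a
p⃗-sequence in a normed space, then some subsequence (x_n)_{n∈A} is a q⃗-sequence for
some q⃗ ⊆ p⃗ with |q⃗| = 2. -/
theorem statement_19 (E : Type) [NormedAddCommGroup E] [NormedSpace ℝ E]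
    (P : Finset ℝ) (hP : ∀ p ∈ P, 1 ≤ p) (hcard : 2 ≤ P.card)
    (x : ℕ → E) (hx : IsPvecSeq (↑P : Set ℝ) Set.univ x) :
    ∃ A : Set ℕ, A.Infinite ∧ ∃ Q : Finset ℝ, Q ⊆ P ∧ Q.card = 2 ∧
      IsPvecSeq (↑Q : Set ℝ) A x := by
  obtain ⟨u, hu, huP⟩ := hx.exists_ultrafilter (by
    exact_mod_cast Finset.card_pos.1 (by omega : 0 < P.card))
  obtain ⟨p, hp, N, h0⟩ := exists_good_empty hu hx.1
  obtain ⟨q, hq, hqp⟩ := Finset.exists_mem_ne (by omega : 1 < P.card) p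
  choose B hBD hB hBq using fun m => huP _ (goodExt_mem hu (LpBound p (N + 1) x) m) q hq
  refine ⟨⋃ m, B m, (hB 0).mono (subset_iUnion _ _), {p, q}, ?_,
    Finset.card_pair hqp.symm, ?_, ?_⟩
  · simp [Finset.insert_subset_iff, hp, hq]
  · intro X hX hXinf
    by_cases hcol : ∃ m, (X ∩ B m).Infinite
    · obtain ⟨m, hm⟩ := hcol
      exact ⟨X ∩ B m, inter_subset_left, hm, q, by simp, (hBq m).mono inter_subset_right⟩
    · push Not at hcol
      obtain ⟨T, hTX, hT, hTp⟩ := exists_isLpSeq_of_goodExt h0 (S := X) (by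
        intro m
        have hfin : (⋃ j ∈ Finset.range m, X ∩ B j).Finite :=
          (Finset.range m).finite_toSet.biUnion fun j _ => hcol j
        obtain ⟨n, hnX, hn⟩ := (hXinf.sdiff hfin).nonempty
        obtain ⟨i, hi⟩ := mem_iUnion.1 (hX hnX)
        refine ⟨n, hnX, goodExt_antitone _ _ ?_ (hBD i hi)⟩
        by_contra hlt
        exact hn (mem_biUnion (Finset.mem_coe.2 (Finset.mem_range.2 (not_le.1 hlt))) ⟨hnX, hi⟩))
      exact ⟨T, hTX, hT, p, by simp, hTp⟩
  · rintro ⟨k, As, hAs, hQ⟩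
    have hcol : ∀ m, ∃ i, (As i ∩ B m).Infinite := by
      intro m
      by_contra! hfin
      refine hB m ((finite_iUnion hfin).subset fun n hn => ?_)
      have hnA : n ∈ ⋃ i, As i := hAs ▸ mem_iUnion.2 ⟨m, hn⟩
      obtain ⟨i, hi⟩ := mem_iUnion.1 hnA
      exact mem_iUnion.2 ⟨i, hi, hn⟩
    choose c hc using hcol
    obtain ⟨i, hi⟩ := Finite.exists_infinite_fiber c
    have hi' : (c ⁻¹' {i}).Infinite := infinite_coe_iff.1 hi
    obtain ⟨Q, hQ, hsat⟩ := hQ i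
    obtain ⟨T, hTA, hT, hTp⟩ := exists_isLpSeq_of_goodExt h0 (S := As i) (by
      intro m
      obtain ⟨j, hj, hmj⟩ := hi'.exists_gt m
      obtain rfl : c j = i := hj
      obtain ⟨n, hn⟩ := (hc j).nonempty
      exact ⟨n, hn.1, goodExt_antitone _ _ hmj.le (hBD j hn.2)⟩)
    obtain ⟨j, hj⟩ := hi'.nonempty
    obtain rfl : c j = i := hj
    have hmem : ∀ r ∈ P, ∀ S ⊆ As (c j), S.Infinite → IsLpSeq r S x → r ∈ Q := by
      intro r hr S hS hSinf hlp
      obtain ⟨S', hS'S, hS', t, ht, hlt⟩ := hsat S hS hSinf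
      have htP : t ∈ P := by
        have := hQ.1 ht
        simp only [Finset.coe_insert, Finset.coe_singleton, mem_insert_iff,
          mem_singleton_iff] at this
        rcases this with rfl | rfl <;> assumption
      rwa [(hlp.mono hS'S).eq_of_infinite (hP r hr) (hP t htP) hS' hlt]
    refine hQ.2 fun r hr => ?_
    simp only [Finset.coe_insert, Finset.coe_singleton, mem_insert_iff,
      mem_singleton_iff] at hr
    rcases hr with rfl | rfl
    · exact hmem _ hp T hTA hT hTp
    · exact hmem _ hq _ inter_subset_left (hc j) ((hBq j).mono inter_subset_right)
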